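/- arXiv:math/9806003 — 7 statements merged into one kernel-verified Lean document; each statement's English description precedes it below -/
import Mathlib

section
/- Let l₁,l₂,l₃,g₁,g₂,g₃ : ℝ → ℝ be differentiable functions satisfying the Kowalewski equations of motion: l₁' = l₂l₃, l₂' = −l₁l₃ − g₃, l₃' = g₂, g₁' = 2g₂l₃ − g₃l₂, g₂' = g₃l₁ − 2g₁l₃, g₃' = g₁l₂ − g₂l₁. Set K₁(t) = l₁(t)² − l₂(t)² + 2g₁(t) and K₂(t) = l₁(t)l₂(t) + g₂(t). Then at every t one has K₁'(t) = 4 l₃(t) K₂(t) and K₂'(t) = − l₃(t) K₁(t). -/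
/-!
In the complex variables `z = l₁ + i l₂` and `γ = g₁ + i g₂`, the equations of motion give
`z' = -i (l₃ z + g₃)` and `γ' = -i (2 l₃ γ - g₃ z)`. The terms in `g₃` cancel in the derivative of
`K = z² + 2 γ = K₁ + 2 i K₂`, which leaves `K' = -2 i l₃ K`; the claim is the real and imaginary
part of this equation, computed coordinatewise.
-/

section EquationsOfMotion

variable {𝕜 A : Type*} [NontriviallyNormedField 𝕜] [NormedCommRing A] [NormedAlgebra 𝕜 A]
  {l₁ l₂ l₃ g₁ g₂ g₃ : 𝕜 → A} {t : 𝕜}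

theorem hasDerivAt_kowalewski_K₁
    (hl₁ : HasDerivAt l₁ (l₂ t * l₃ t) t)
    (hl₂ : HasDerivAt l₂ (-(l₁ t * l₃ t) - g₃ t) t)
    (hg₁ : HasDerivAt g₁ (2 * g₂ t * l₃ t - g₃ t * l₂ t) t) :
    HasDerivAt (fun s => l₁ s ^ 2 - l₂ s ^ 2 + 2 * g₁ s)
      (4 * l₃ t * (l₁ t * l₂ t + g₂ t)) t := by
  have hK₁ : HasDerivAt (fun s => l₁ s ^ 2 - l₂ s ^ 2 + 2 * g₁ s)
      (2 * l₁ t * (l₂ t * l₃ t) - 2 * l₂ t * (-(l₁ t * l₃ t) - g₃ t)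
        + 2 * (2 * g₂ t * l₃ t - g₃ t * l₂ t)) t := by
    simpa using ((hl₁.fun_pow 2).fun_sub (hl₂.fun_pow 2)).fun_add (hg₁.const_mul 2)
  exact hK₁.congr_deriv (by ring)

theorem hasDerivAt_kowalewski_K₂
    (hl₁ : HasDerivAt l₁ (l₂ t * l₃ t) t)
    (hl₂ : HasDerivAt l₂ (-(l₁ t * l₃ t) - g₃ t) t)
    (hg₂ : HasDerivAt g₂ (g₃ t * l₁ t - 2 * g₁ t * l₃ t) t) :
    HasDerivAt (fun s => l₁ s * l₂ s + g₂ s)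
      (-l₃ t * (l₁ t ^ 2 - l₂ t ^ 2 + 2 * g₁ t)) t := by
  have hK₂ : HasDerivAt (fun s => l₁ s * l₂ s + g₂ s)
      (l₂ t * l₃ t * l₂ t + l₁ t * (-(l₁ t * l₃ t) - g₃ t)
        + (g₃ t * l₁ t - 2 * g₁ t * l₃ t)) t :=
    (hl₁.fun_mul hl₂).fun_add hg₂
  exact hK₂.congr_deriv (by ring)

theorem kowalewski_K_system_general
    (hl₁ : HasDerivAt l₁ (l₂ t * l₃ t) t)
    (hl₂ : HasDerivAt l₂ (-(l₁ t * l₃ t) - g₃ t) t)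
    (hg₁ : HasDerivAt g₁ (2 * g₂ t * l₃ t - g₃ t * l₂ t) t)
    (hg₂ : HasDerivAt g₂ (g₃ t * l₁ t - 2 * g₁ t * l₃ t) t) :
    HasDerivAt (fun s => l₁ s ^ 2 - l₂ s ^ 2 + 2 * g₁ s)
        (4 * l₃ t * (l₁ t * l₂ t + g₂ t)) t ∧
      HasDerivAt (fun s => l₁ s * l₂ s + g₂ s)
        (-l₃ t * (l₁ t ^ 2 - l₂ t ^ 2 + 2 * g₁ t)) t :=
  ⟨hasDerivAt_kowalewski_K₁ hl₁ hl₂ hg₁, hasDerivAt_kowalewski_K₂ hl₁ hl₂ hg₂⟩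

end EquationsOfMotion

/-- With `K₁ = l₁² − l₂² + 2g₁` and `K₂ = l₁l₂ + g₂`, the Kowalewski
equations of motion imply `K₁' = 4 l₃ K₂` and `K₂' = − l₃ K₁`. -/
theorem kowalewski_K_system
    (l₁ l₂ l₃ g₁ g₂ g₃ : ℝ → ℝ)
    (hl₁ : Differentiable ℝ l₁) (hl₂ : Differentiable ℝ l₂)
    (hl₃ : Differentiable ℝ l₃) (hg₁ : Differentiable ℝ g₁)
    (hg₂ : Differentiable ℝ g₂) (hg₃ : Differentiable ℝ g₃)
    (hdl₁ : ∀ t, deriv l₁ t = l₂ t * l₃ t)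
    (hdl₂ : ∀ t, deriv l₂ t = -(l₁ t * l₃ t) - g₃ t)
    (hdl₃ : ∀ t, deriv l₃ t = g₂ t)
    (hdg₁ : ∀ t, deriv g₁ t = 2 * g₂ t * l₃ t - g₃ t * l₂ t)
    (hdg₂ : ∀ t, deriv g₂ t = g₃ t * l₁ t - 2 * g₁ t * l₃ t)
    (hdg₃ : ∀ t, deriv g₃ t = g₁ t * l₂ t - g₂ t * l₁ t) :
    (∀ t, deriv (fun s => l₁ s ^ 2 - l₂ s ^ 2 + 2 * g₁ s) t
        = 4 * l₃ t * (l₁ t * l₂ t + g₂ t)) ∧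
    (∀ t, deriv (fun s => l₁ s * l₂ s + g₂ s) t
        = - l₃ t * (l₁ t ^ 2 - l₂ t ^ 2 + 2 * g₁ t)) := by
  have hK (t : ℝ) := kowalewski_K_system_general
    ((hl₁ t).hasDerivAt.congr_deriv (hdl₁ t)) ((hl₂ t).hasDerivAt.congr_deriv (hdl₂ t))
    ((hg₁ t).hasDerivAt.congr_deriv (hdg₁ t)) ((hg₂ t).hasDerivAt.congr_deriv (hdg₂ t))
  exact ⟨fun t => (hK t).1.deriv, fun t => (hK t).2.deriv⟩
end

section
/- Let l₁,l₂,l₃,g₁,g₂,g₃ : ℝ → ℝ be differentiable functions satisfying the Kowalewski equations of motion: l₁' = l₂l₃, l₂' = −l₁l₃ − g₃, l₃' = g₂, g₁' = 2g₂l₃ − g₃l₂, g₂' = g₃l₁ − 2g₁l₃, g₃' = g₁l₂ − g₂l₁. Then Kowalewski's integral I₂(t) = (l₁(t)² − l₂(t)² + 2g₁(t))² + 4(l₁(t)l₂(t) + g₂(t))² has derivative zero at every t; in particular I₂ is constant along solutions. -/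
/-!
With `z = l₁ + i l₂` and `γ = g₁ + i g₂` the equations of motion give `z' = -i (l₃ z + g₃)` and
`γ' = -2i l₃ γ + i g₃ z`. In `ξ = z² + 2γ` the terms in `g₃` cancel, leaving `ξ' = -2i l₃ ξ`: the
point `ξ` rotates about the origin with angular velocity `-2l₃`, so `I₂ = |ξ|²` is conserved.
In terms of `Re ξ = l₁² - l₂² + 2g₁` and `Im ξ = 2(l₁l₂ + g₂)` the rotation reads
`(Re ξ)' = 2l₃ Im ξ`, `(Im ξ)' = -2l₃ Re ξ`, which makes sense in every commutative normed algebra.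
-/

section Kowalewski

variable {𝕜 A : Type*} [NontriviallyNormedField 𝕜] [NormedCommRing A] [NormedAlgebra 𝕜 A] {t : 𝕜}

theorem hasDerivAt_sq_add_sq_of_rotation {x y : 𝕜 → A} {ω : A}
    (hx : HasDerivAt x (ω * y t) t) (hy : HasDerivAt y (-(ω * x t)) t) :
    HasDerivAt (fun s => x s ^ 2 + y s ^ 2) 0 t := by
  refine ((hx.fun_pow 2).fun_add (hy.fun_pow 2)).congr_deriv ?_
  push_cast
  ring

variable {l₁ l₂ l₃ g₁ g₂ g₃ : 𝕜 → A}

theorem hasDerivAt_kowalewski_re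
    (hl₁ : HasDerivAt l₁ (l₂ t * l₃ t) t)
    (hl₂ : HasDerivAt l₂ (-(l₁ t * l₃ t) - g₃ t) t)
    (hg₁ : HasDerivAt g₁ (2 * g₂ t * l₃ t - g₃ t * l₂ t) t) :
    HasDerivAt (fun s => l₁ s ^ 2 - l₂ s ^ 2 + 2 * g₁ s)
      (2 * l₃ t * (2 * (l₁ t * l₂ t + g₂ t))) t := by
  refine (((hl₁.fun_pow 2).fun_sub (hl₂.fun_pow 2)).fun_add (hg₁.const_mul 2)).congr_deriv ?_
  push_cast
  ring

theorem hasDerivAt_kowalewski_im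
    (hl₁ : HasDerivAt l₁ (l₂ t * l₃ t) t)
    (hl₂ : HasDerivAt l₂ (-(l₁ t * l₃ t) - g₃ t) t)
    (hg₂ : HasDerivAt g₂ (g₃ t * l₁ t - 2 * g₁ t * l₃ t) t) :
    HasDerivAt (fun s => 2 * (l₁ s * l₂ s + g₂ s))
      (-(2 * l₃ t * (l₁ t ^ 2 - l₂ t ^ 2 + 2 * g₁ t))) t := by
  refine (((hl₁.fun_mul hl₂).fun_add hg₂).const_mul 2).congr_deriv ?_
  ring

theorem kowalewski_integral_I₂_conserved_general
    (hl₁ : HasDerivAt l₁ (l₂ t * l₃ t) t)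
    (hl₂ : HasDerivAt l₂ (-(l₁ t * l₃ t) - g₃ t) t)
    (hg₁ : HasDerivAt g₁ (2 * g₂ t * l₃ t - g₃ t * l₂ t) t)
    (hg₂ : HasDerivAt g₂ (g₃ t * l₁ t - 2 * g₁ t * l₃ t) t) :
    HasDerivAt (fun s =>
      (l₁ s ^ 2 - l₂ s ^ 2 + 2 * g₁ s) ^ 2 + 4 * (l₁ s * l₂ s + g₂ s) ^ 2) 0 t := by
  have four_mul_sq (a : A) : 4 * a ^ 2 = (2 * a) ^ 2 := by ring
  simp only [four_mul_sq]
  exact hasDerivAt_sq_add_sq_of_rotation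
    (hasDerivAt_kowalewski_re hl₁ hl₂ hg₁) (hasDerivAt_kowalewski_im hl₁ hl₂ hg₂)

end Kowalewski

/-- Kowalewski's integral `I₂ = (l₁² − l₂² + 2g₁)² + 4(l₁l₂ + g₂)²` is conserved
along solutions of the Kowalewski equations of motion. -/
theorem kowalewski_integral_I₂_conserved
    (l₁ l₂ l₃ g₁ g₂ g₃ : ℝ → ℝ)
    (hl₁ : Differentiable ℝ l₁) (hl₂ : Differentiable ℝ l₂)
    (hl₃ : Differentiable ℝ l₃) (hg₁ : Differentiable ℝ g₁)
    (hg₂ : Differentiable ℝ g₂) (hg₃ : Differentiable ℝ g₃)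
    (hdl₁ : ∀ t, deriv l₁ t = l₂ t * l₃ t)
    (hdl₂ : ∀ t, deriv l₂ t = -(l₁ t * l₃ t) - g₃ t)
    (hdl₃ : ∀ t, deriv l₃ t = g₂ t)
    (hdg₁ : ∀ t, deriv g₁ t = 2 * g₂ t * l₃ t - g₃ t * l₂ t)
    (hdg₂ : ∀ t, deriv g₂ t = g₃ t * l₁ t - 2 * g₁ t * l₃ t)
    (hdg₃ : ∀ t, deriv g₃ t = g₁ t * l₂ t - g₂ t * l₁ t) :
    ∀ t, deriv (fun s =>
        (l₁ s ^ 2 - l₂ s ^ 2 + 2 * g₁ s) ^ 2 + 4 * (l₁ s * l₂ s + g₂ s) ^ 2) t = 0 :=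
  fun t => (kowalewski_integral_I₂_conserved_general
    (hdl₁ t ▸ (hl₁ t).hasDerivAt) (hdl₂ t ▸ (hl₂ t).hasDerivAt)
    (hdg₁ t ▸ (hg₁ t).hasDerivAt) (hdg₂ t ▸ (hg₂ t).hasDerivAt)).deriv
end

section
/- Let K be a field of characteristic zero (e.g. K = ℂ), let l₁,l₂,l₃,g₁,g₂,g₃ ∈ K satisfy l₁g₁ + l₂g₂ + l₃g₃ = 0 and g₁² + g₂² + g₃² = 1, and set H = (1/2)(l₁² + l₂² + 2l₃²) − g₁ and I₂ = (l₁² − l₂² + 2g₁)² + 4(l₁l₂ + g₂)². Then for every λ ∈ K with λ ≠ 0 and every μ ∈ K, the Lax matrix L(λ) (the explicit 4×4 matrix below) satisfies det(L(λ) − μ·𝟙₄) = μ⁴ − 2·d₁(λ²)·μ² + d₂(λ²), where d₁(z) = z⁻¹ − 2H + 2z and d₂(z) = z⁻² − 4Hz⁻¹ + I₂. -/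
/-!
Cut `L(λ)` into `2 × 2` blocks. The diagonal blocks `A` and `D` are traceless and, writing `B` for
the upper right block, the lower left block is `-adj B`; in other words `L(λ)` lies in `sp(4)`.
Expanding `det [A, B; C, D] = det A det D + det B det C - tr (adj A B adj D C)` for such a matrix
shows that its characteristic polynomial is biquadratic, namely
`μ⁴ + (det A + det D + 2 det B) μ² + (det A det D + (det B)² + tr (A B D adj B))`,
and it remains to compute the two coefficients.
-/

section TwoByTwoBlocks

open Matrix

variable {R : Type*} [CommRing R]

theorem det_reindex_sub_smul_one {m n : Type*} [Fintype m] [DecidableEq m] [Fintype n]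
    [DecidableEq n] (e : m ≃ n) (M : Matrix m m R) (mu : R) :
    (reindex e e M - mu • 1).det = (M - mu • 1).det := by
  rw [← det_reindex_self e (M - mu • 1)]
  simp only [reindex_apply, submatrix_sub, submatrix_smul, Pi.sub_apply, Pi.smul_apply,
    submatrix_one_equiv]

theorem reindex_fromBlocks_fin_two {α : Type*} (A B C D : Matrix (Fin 2) (Fin 2) α) :
    reindex finSumFinEquiv finSumFinEquiv (fromBlocks A B C D) =
      !![A 0 0, A 0 1, B 0 0, B 0 1;
         A 1 0, A 1 1, B 1 0, B 1 1;
         C 0 0, C 0 1, D 0 0, D 0 1;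
         C 1 0, C 1 1, D 1 0, D 1 1] := by
  ext i j
  fin_cases i <;> fin_cases j <;> rfl

theorem det_fromBlocks_fin_two (A B C D : Matrix (Fin 2) (Fin 2) R) :
    (fromBlocks A B C D).det =
      A.det * D.det + B.det * C.det - (adjugate A * B * adjugate D * C).trace := by
  rw [← det_reindex_self finSumFinEquiv, reindex_fromBlocks_fin_two, det_succ_row_zero]
  simp only [Nat.reduceAdd, Fin.isValue, of_apply, cons_val', cons_val_fin_one, cons_val_zero,
    cons_val_one, cons_val, submatrix_apply, Fin.succAbove, Fin.succ_zero_eq_one,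
    Fin.succ_one_eq_two, Fin.reduceSucc, Fin.castSucc_zero, Fin.castSucc_one, Fin.reduceCastSucc,
    Fin.reduceLT, lt_self_iff_false, not_lt_zero, zero_lt_one, ↓reduceIte, Fin.coe_ofNat_eq_mod,
    Fin.sum_univ_two, Fin.sum_univ_four, det_fin_two, det_fin_three,
    adjugate_fin_two, trace_fin_two, Matrix.mul_apply]
  ring

theorem adjugate_fin_two_eq_trace_smul_one_sub (A : Matrix (Fin 2) (Fin 2) R) :
    adjugate A = A.trace • 1 - A := by
  rw [adjugate_fin_two, trace_fin_two]
  ext i j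
  fin_cases i <;> fin_cases j <;> simp

theorem det_sub_smul_one_of_trace_eq_zero {A : Matrix (Fin 2) (Fin 2) R} (hA : A.trace = 0)
    (mu : R) : (A - mu • 1).det = mu ^ 2 + A.det := by
  rw [trace_fin_two] at hA
  simp only [det_fin_two, Matrix.sub_apply, Matrix.smul_apply, one_apply_eq, smul_eq_mul,
    one_apply_ne zero_ne_one, one_apply_ne one_ne_zero]
  linear_combination -mu * hA

theorem adjugate_sub_smul_one_of_trace_eq_zero {A : Matrix (Fin 2) (Fin 2) R} (hA : A.trace = 0)
    (mu : R) : adjugate (A - mu • 1) = -(A + mu • 1) := by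
  rw [adjugate_fin_two_eq_trace_smul_one_sub, trace_sub, hA, trace_smul, trace_one,
    Fintype.card_fin]
  module

theorem trace_add_smul_one_mul_mul_adjugate {A D : Matrix (Fin 2) (Fin 2) R}
    (hA : A.trace = 0) (hD : D.trace = 0) (B : Matrix (Fin 2) (Fin 2) R) (mu : R) :
    ((A + mu • 1) * B * (D + mu • 1) * adjugate B).trace =
      (A * B * D * adjugate B).trace + 2 * mu ^ 2 * B.det := by
  have trace_A_term : (A * B * adjugate B).trace = 0 := by
    rw [mul_assoc, mul_adjugate, mul_smul_one, trace_smul, hA, smul_zero]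
  have trace_D_term : (B * D * adjugate B).trace = 0 := by
    rw [trace_mul_comm, ← mul_assoc, adjugate_mul, smul_one_mul, trace_smul, hD, smul_zero]
  have trace_scalar_term : (B * adjugate B).trace = 2 * B.det := by
    rw [mul_adjugate, trace_smul, trace_one, Fintype.card_fin, smul_eq_mul, mul_comm, Nat.cast_two]
  simp only [add_mul, mul_add, smul_mul_assoc, mul_smul_comm, one_mul, mul_one, trace_add,
    trace_smul, trace_A_term, trace_D_term, trace_scalar_term, smul_eq_mul]
  ring

theorem det_fromBlocks_neg_adjugate_sub_smul_one {A D : Matrix (Fin 2) (Fin 2) R}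
    (hA : A.trace = 0) (hD : D.trace = 0) (B : Matrix (Fin 2) (Fin 2) R) (mu : R) :
    (fromBlocks A B (-adjugate B) D - mu • 1).det =
      mu ^ 4 + (A.det + D.det + 2 * B.det) * mu ^ 2
        + (A.det * D.det + B.det ^ 2 + (A * B * D * adjugate B).trace) := by
  have blocks_sub : fromBlocks A B (-adjugate B) D - mu • 1 =
      fromBlocks (A - mu • 1) B (-adjugate B) (D - mu • 1) := by
    rw [sub_eq_add_neg, ← fromBlocks_one, fromBlocks_smul, fromBlocks_neg, fromBlocks_add]
    simp only [smul_zero, neg_zero, add_zero, sub_eq_add_neg]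
  have det_neg_adjugate : (-adjugate B).det = B.det := by
    simp [det_neg, det_adjugate]
  rw [blocks_sub, det_fromBlocks_fin_two, det_neg_adjugate,
    det_sub_smul_one_of_trace_eq_zero hA, det_sub_smul_one_of_trace_eq_zero hD,
    adjugate_sub_smul_one_of_trace_eq_zero hA, adjugate_sub_smul_one_of_trace_eq_zero hD]
  simp only [neg_mul, mul_neg, neg_neg, trace_neg, trace_add_smul_one_mul_mul_adjugate hA hD]
  ring

end TwoByTwoBlocks

section LaxMatrix

open Matrix

variable {R : Type*} [CommRing R] (l₁ l₂ l₃ g₁ g₂ g₃ lam tau : R)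

/-- The Lax matrix of the Kowalewski top with spectral parameter `lam`. The argument `tau` stands
for `lam⁻¹`, which lets the matrix be written over any commutative ring. -/
def kowalewskiLax : Matrix (Fin 4) (Fin 4) R :=
  !![g₁ * tau, g₂ * tau, -l₂ + g₃ * tau, -l₁;
     g₂ * tau, -g₁ * tau, l₁, -l₂ - g₃ * tau;
     l₂ + g₃ * tau, -l₁, -2 * lam - g₁ * tau, -2 * l₃ + g₂ * tau;
     l₁, l₂ - g₃ * tau, 2 * l₃ + g₂ * tau, 2 * lam + g₁ * tau]

/-- The upper left `2 × 2` block of `kowalewskiLax`. -/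
def kowalewskiLaxUpperLeft : Matrix (Fin 2) (Fin 2) R :=
  !![g₁ * tau, g₂ * tau;
     g₂ * tau, -g₁ * tau]

/-- The upper right `2 × 2` block of `kowalewskiLax`; it also determines the lower left one, see
`kowalewskiLax_eq_reindex_fromBlocks`. -/
def kowalewskiLaxUpperRight : Matrix (Fin 2) (Fin 2) R :=
  !![-l₂ + g₃ * tau, -l₁;
     l₁, -l₂ - g₃ * tau]

/-- The lower right `2 × 2` block of `kowalewskiLax`. -/
def kowalewskiLaxLowerRight : Matrix (Fin 2) (Fin 2) R :=
  !![-2 * lam - g₁ * tau, -2 * l₃ + g₂ * tau;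
     2 * l₃ + g₂ * tau, 2 * lam + g₁ * tau]

theorem kowalewskiLax_eq_reindex_fromBlocks :
    kowalewskiLax l₁ l₂ l₃ g₁ g₂ g₃ lam tau =
      reindex finSumFinEquiv finSumFinEquiv
        (fromBlocks (kowalewskiLaxUpperLeft g₁ g₂ tau) (kowalewskiLaxUpperRight l₁ l₂ g₃ tau)
          (-adjugate (kowalewskiLaxUpperRight l₁ l₂ g₃ tau))
          (kowalewskiLaxLowerRight l₃ g₁ g₂ lam tau)) := by
  rw [reindex_fromBlocks_fin_two]
  simp [kowalewskiLax, kowalewskiLaxUpperLeft, kowalewskiLaxUpperRight, kowalewskiLaxLowerRight,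
    adjugate_fin_two_of, add_comm, sub_eq_add_neg]

theorem trace_kowalewskiLaxUpperLeft : (kowalewskiLaxUpperLeft g₁ g₂ tau).trace = 0 := by
  simp [kowalewskiLaxUpperLeft, trace_fin_two]

theorem trace_kowalewskiLaxLowerRight :
    (kowalewskiLaxLowerRight l₃ g₁ g₂ lam tau).trace = 0 := by
  simp only [kowalewskiLaxLowerRight, trace_fin_two_of]
  ring

theorem det_kowalewskiLaxUpperLeft :
    (kowalewskiLaxUpperLeft g₁ g₂ tau).det = -(g₁ ^ 2 + g₂ ^ 2) * tau ^ 2 := by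
  simp only [kowalewskiLaxUpperLeft, det_fin_two_of]
  ring

theorem det_kowalewskiLaxUpperRight :
    (kowalewskiLaxUpperRight l₁ l₂ g₃ tau).det = l₁ ^ 2 + l₂ ^ 2 - g₃ ^ 2 * tau ^ 2 := by
  simp only [kowalewskiLaxUpperRight, det_fin_two_of]
  ring

variable {lam tau}

theorem det_kowalewskiLaxLowerRight (htau : lam * tau = 1) :
    (kowalewskiLaxLowerRight l₃ g₁ g₂ lam tau).det =
      4 * l₃ ^ 2 - 4 * lam ^ 2 - 4 * g₁ - (g₁ ^ 2 + g₂ ^ 2) * tau ^ 2 := by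
  simp only [kowalewskiLaxLowerRight, det_fin_two_of]
  linear_combination -4 * g₁ * htau

theorem trace_mul_kowalewskiLax_blocks (htau : lam * tau = 1) :
    (kowalewskiLaxUpperLeft g₁ g₂ tau * kowalewskiLaxUpperRight l₁ l₂ g₃ tau *
        kowalewskiLaxLowerRight l₃ g₁ g₂ lam tau *
        adjugate (kowalewskiLaxUpperRight l₁ l₂ g₃ tau)).trace =
      4 * g₁ * (l₁ ^ 2 - l₂ ^ 2) + 8 * g₂ * l₁ * l₂
        + (8 * (l₁ * l₂ * g₁ * g₂ + l₁ * l₃ * g₁ * g₃ + l₂ * l₃ * g₂ * g₃) + 4 * g₁ * g₃ ^ 2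
          + 2 * (l₁ ^ 2 - l₂ ^ 2) * (g₁ ^ 2 - g₂ ^ 2)) * tau ^ 2
        + 2 * g₃ ^ 2 * (g₁ ^ 2 + g₂ ^ 2) * tau ^ 4 := by
  simp only [kowalewskiLaxUpperLeft, kowalewskiLaxUpperRight, kowalewskiLaxLowerRight,
    adjugate_fin_two_of, mul_fin_two, trace_fin_two_of]
  linear_combination
    (4 * g₁ * (l₁ ^ 2 - l₂ ^ 2) + 8 * g₂ * l₁ * l₂ + 4 * g₁ * g₃ ^ 2 * tau ^ 2) * htau

variable {l₁ l₂ l₃ g₁} {H : R}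

theorem kowalewskiLax_quadratic_coeff (htau : lam * tau = 1)
    (hH : 2 * H = l₁ ^ 2 + l₂ ^ 2 + 2 * l₃ ^ 2 - 2 * g₁) :
    (kowalewskiLaxUpperLeft g₁ g₂ tau).det + (kowalewskiLaxLowerRight l₃ g₁ g₂ lam tau).det
        + 2 * (kowalewskiLaxUpperRight l₁ l₂ g₃ tau).det =
      -2 * ((g₁ ^ 2 + g₂ ^ 2 + g₃ ^ 2) * tau ^ 2 - 2 * H + 2 * lam ^ 2) := by
  rw [det_kowalewskiLaxUpperLeft, det_kowalewskiLaxLowerRight _ _ _ htau,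
    det_kowalewskiLaxUpperRight]
  linear_combination -2 * hH

theorem kowalewskiLax_constant_coeff (htau : lam * tau = 1)
    (hH : 2 * H = l₁ ^ 2 + l₂ ^ 2 + 2 * l₃ ^ 2 - 2 * g₁) :
    (kowalewskiLaxUpperLeft g₁ g₂ tau).det * (kowalewskiLaxLowerRight l₃ g₁ g₂ lam tau).det
        + (kowalewskiLaxUpperRight l₁ l₂ g₃ tau).det ^ 2
        + (kowalewskiLaxUpperLeft g₁ g₂ tau * kowalewskiLaxUpperRight l₁ l₂ g₃ tau *
            kowalewskiLaxLowerRight l₃ g₁ g₂ lam tau *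
            adjugate (kowalewskiLaxUpperRight l₁ l₂ g₃ tau)).trace =
      (g₁ ^ 2 + g₂ ^ 2 + g₃ ^ 2) ^ 2 * tau ^ 4
        - 4 * (H * (g₁ ^ 2 + g₂ ^ 2 + g₃ ^ 2) - (l₁ * g₁ + l₂ * g₂ + l₃ * g₃) ^ 2) * tau ^ 2
        + ((l₁ ^ 2 - l₂ ^ 2 + 2 * g₁) ^ 2 + 4 * (l₁ * l₂ + g₂) ^ 2) := by
  rw [det_kowalewskiLaxUpperLeft, det_kowalewskiLaxLowerRight _ _ _ htau,
    det_kowalewskiLaxUpperRight, trace_mul_kowalewskiLax_blocks _ _ _ _ _ _ htau]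
  linear_combination 2 * (g₁ ^ 2 + g₂ ^ 2 + g₃ ^ 2) * tau ^ 2 * hH
    + 4 * (g₁ ^ 2 + g₂ ^ 2) * (lam * tau + 1) * htau

end LaxMatrix

theorem kowalewski_lax_spectral_curve_general {R : Type*} [CommRing R]
    (l₁ l₂ l₃ g₁ g₂ g₃ : R) {H : R}
    (hH : 2 * H = l₁ ^ 2 + l₂ ^ 2 + 2 * l₃ ^ 2 - 2 * g₁)
    {lam tau : R} (htau : lam * tau = 1) (mu : R) :
    (kowalewskiLax l₁ l₂ l₃ g₁ g₂ g₃ lam tau - mu • 1).det =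
      mu ^ 4 - 2 * ((g₁ ^ 2 + g₂ ^ 2 + g₃ ^ 2) * tau ^ 2 - 2 * H + 2 * lam ^ 2) * mu ^ 2
        + ((g₁ ^ 2 + g₂ ^ 2 + g₃ ^ 2) ^ 2 * tau ^ 4
          - 4 * (H * (g₁ ^ 2 + g₂ ^ 2 + g₃ ^ 2) - (l₁ * g₁ + l₂ * g₂ + l₃ * g₃) ^ 2) * tau ^ 2
          + ((l₁ ^ 2 - l₂ ^ 2 + 2 * g₁) ^ 2 + 4 * (l₁ * l₂ + g₂) ^ 2)) := by
  rw [kowalewskiLax_eq_reindex_fromBlocks, det_reindex_sub_smul_one,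
    det_fromBlocks_neg_adjugate_sub_smul_one (trace_kowalewskiLaxUpperLeft g₁ g₂ tau)
      (trace_kowalewskiLaxLowerRight l₃ g₁ g₂ lam tau),
    kowalewskiLax_quadratic_coeff _ _ htau hH, kowalewskiLax_constant_coeff _ _ htau hH]
  ring

/-- The characteristic polynomial of the Lax matrix of the Kowalewski top:
under the constraints `(l,g) = 0` and `|g|² = 1`, one has
`det(L(λ) − μ·𝟙₄) = μ⁴ − 2 d₁(λ²) μ² + d₂(λ²)`, where
`d₁(z) = z⁻¹ − 2H + 2z` and `d₂(z) = z⁻² − 4Hz⁻¹ + I₂`. -/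
theorem kowalewski_lax_spectral_curve
    (K : Type*) [Field K] [CharZero K]
    (l₁ l₂ l₃ g₁ g₂ g₃ : K)
    (horth : l₁ * g₁ + l₂ * g₂ + l₃ * g₃ = 0)
    (hnorm : g₁ ^ 2 + g₂ ^ 2 + g₃ ^ 2 = 1)
    (H I₂ : K)
    (hH : H = (1/2) * (l₁ ^ 2 + l₂ ^ 2 + 2 * l₃ ^ 2) - g₁)
    (hI₂ : I₂ = (l₁ ^ 2 - l₂ ^ 2 + 2 * g₁) ^ 2 + 4 * (l₁ * l₂ + g₂) ^ 2)
    (lam : K) (hlam : lam ≠ 0) (mu : K)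
    (L : Matrix (Fin 4) (Fin 4) K)
    (hL : L = !![g₁ / lam, g₂ / lam, -l₂ + g₃ / lam, -l₁;
                 g₂ / lam, -g₁ / lam, l₁, -l₂ - g₃ / lam;
                 l₂ + g₃ / lam, -l₁, -2 * lam - g₁ / lam, -2 * l₃ + g₂ / lam;
                 l₁, l₂ - g₃ / lam, 2 * l₃ + g₂ / lam, 2 * lam + g₁ / lam]) :
    (L - mu • (1 : Matrix (Fin 4) (Fin 4) K)).det
      = mu ^ 4 - 2 * ((lam ^ 2)⁻¹ - 2 * H + 2 * lam ^ 2) * mu ^ 2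
        + ((lam ^ 2)⁻¹ ^ 2 - 4 * H * (lam ^ 2)⁻¹ + I₂) := by
  have hL' : L = kowalewskiLax l₁ l₂ l₃ g₁ g₂ g₃ lam lam⁻¹ := by
    simp only [hL, kowalewskiLax, div_eq_mul_inv]
  have hH' : 2 * H = l₁ ^ 2 + l₂ ^ 2 + 2 * l₃ ^ 2 - 2 * g₁ := by
    rw [hH]
    ring
  rw [hL', kowalewski_lax_spectral_curve_general _ _ _ _ _ _ hH' (mul_inv_cancel₀ hlam), horth,
    hnorm, hI₂]
  ring
end

section
/- Let K be a field of characteristic zero containing an element s with s² = 2, and let H, I₂ ∈ K. Suppose z, μ ∈ K with z ≠ 0 satisfy the equation of the curve C₂: μ⁴ − 2(z⁻¹ − 2H + 2z)μ² + (z⁻² − 4Hz⁻¹ + I₂) = 0. Define x = (1/2)(μ² − z⁻¹) and u = (μ/s)(x² + 2Hx − 1 + I₂/4). Then x² + 2Hx + I₂/4 = 2xz + 1, and u² = x(x² + 2Hx + I₂/4)(x² + 2Hx − 1 + I₂/4). In other words, the change of variables x = (1/2)(μ² − z⁻¹), u = (μ/√2)(x² + 2Hx − 1 + I₂/4) brings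 the curve C₂ to the canonical hyperelliptic form u² = x(x² + 2Hx + I₂/4)(x² + 2Hx − 1 + I₂/4). -/
/-!
Set `w = z⁻¹`, so that `μ² = 2x + w`. Substituting this into the equation of `C₂` cancels,
because `z w = 1`, every power of `w` and leaves an equation linear in `z`, namely `P = 2xz` with
`P = x² + 2Hx − 1 + I₂/4`. Since also `μ² z = 2xz + 1 = P + 1`, we get
`u² = (μ²/2) P² = x (μ² z) P = x (P + 1) P`.
-/

theorem C₂_equation_of_mul_eq_one {R : Type*} [CommRing R] {z w : R} (hzw : z * w = 1)
    (H I₂ x : R) :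
    (2 * x + w) ^ 2 - 2 * (w - 2 * H + 2 * z) * (2 * x + w) + (w ^ 2 - 4 * H * w + I₂) =
      4 * x ^ 2 + 8 * H * x + I₂ - 4 * (2 * x * z + 1) := by
  linear_combination -4 * hzw

section Field

variable {K : Type*} [Field K] {z mu x : K}

theorem sq_div_mul_eq_of_sq_eq_two {s : K} (hs : s ^ 2 = 2) (hz : z ≠ 0)
    (hmu : mu ^ 2 = 2 * x + z⁻¹) :
    (mu / s * (2 * x * z)) ^ 2 = x * (2 * x * z + 1) * (2 * x * z) := by
  have mu_sq_mul : mu ^ 2 * z = 2 * x * z + 1 := by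
    rw [hmu, add_mul, inv_mul_cancel₀ hz]
  calc (mu / s * (2 * x * z)) ^ 2
      = mu ^ 2 / 2 * (2 * x * z) ^ 2 := by rw [mul_pow, div_pow, hs]
    _ = x * (mu ^ 2 * z) * (2 * x * z) := by field_simp
    _ = x * (2 * x * z + 1) * (2 * x * z) := by rw [mu_sq_mul]

variable [NeZero (2 : K)]

theorem C₂_equation_iff (hz : z ≠ 0) (hmu : mu ^ 2 = 2 * x + z⁻¹) (H I₂ : K) :
    mu ^ 4 - 2 * (z⁻¹ - 2 * H + 2 * z) * mu ^ 2 + (z⁻¹ ^ 2 - 4 * H * z⁻¹ + I₂) = 0 ↔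
      x ^ 2 + 2 * H * x + I₂ / 4 = 2 * x * z + 1 := by
  have hfour : (4 : K) ≠ 0 := by
    rw [show (4 : K) = 2 * 2 by norm_num]
    exact mul_ne_zero two_ne_zero two_ne_zero
  have mu_pow_four : mu ^ 4 = (mu ^ 2) ^ 2 := by ring
  rw [mu_pow_four, hmu, C₂_equation_of_mul_eq_one (mul_inv_cancel₀ hz), sub_eq_zero,
    ← mul_right_inj' hfour (b := x ^ 2 + 2 * H * x + I₂ / 4)]
  have clear_denom : 4 * (x ^ 2 + 2 * H * x + I₂ / 4) = 4 * x ^ 2 + 8 * H * x + I₂ := by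
    field_simp
    ring
  rw [clear_denom]

theorem C₂_canonical_form_general {s : K} (hs : s ^ 2 = 2) {H I₂ u : K} (hz : z ≠ 0)
    (hcurve : mu ^ 4 - 2 * (z⁻¹ - 2 * H + 2 * z) * mu ^ 2
        + (z⁻¹ ^ 2 - 4 * H * z⁻¹ + I₂) = 0)
    (hx : x = (1 / 2) * (mu ^ 2 - z⁻¹))
    (hu : u = (mu / s) * (x ^ 2 + 2 * H * x - 1 + I₂ / 4)) :
    x ^ 2 + 2 * H * x + I₂ / 4 = 2 * x * z + 1 ∧
    u ^ 2 = x * (x ^ 2 + 2 * H * x + I₂ / 4) * (x ^ 2 + 2 * H * x - 1 + I₂ / 4) := by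
  have hmu : mu ^ 2 = 2 * x + z⁻¹ := by
    rw [hx, ← mul_assoc, mul_one_div_cancel two_ne_zero, one_mul, sub_add_cancel]
  have quadratic_eq := (C₂_equation_iff hz hmu H I₂).mp hcurve
  have shifted_quadratic_eq : x ^ 2 + 2 * H * x - 1 + I₂ / 4 = 2 * x * z := by
    linear_combination quadratic_eq
  refine ⟨quadratic_eq, ?_⟩
  rw [hu, quadratic_eq, shifted_quadratic_eq]
  exact sq_div_mul_eq_of_sq_eq_two hs hz hmu

end Field

/-- The change of variables `x = (1/2)(μ² − z⁻¹)`, `u = (μ/√2)(x² + 2Hx − 1 + I₂/4)`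
brings the curve `C₂ : μ⁴ − 2(z⁻¹ − 2H + 2z)μ² + (z⁻² − 4Hz⁻¹ + I₂) = 0` to the canonical
hyperelliptic form `u² = x(x² + 2Hx + I₂/4)(x² + 2Hx − 1 + I₂/4)`. -/
theorem C₂_canonical_form
    (K : Type*) [Field K] [CharZero K]
    (s : K) (hs : s ^ 2 = 2)
    (H I₂ : K) (z mu : K) (hz : z ≠ 0)
    (hcurve : mu ^ 4 - 2 * (z⁻¹ - 2 * H + 2 * z) * mu ^ 2
        + (z⁻¹ ^ 2 - 4 * H * z⁻¹ + I₂) = 0)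
    (x u : K)
    (hx : x = (1/2) * (mu ^ 2 - z⁻¹))
    (hu : u = (mu / s) * (x ^ 2 + 2 * H * x - 1 + I₂ / 4)) :
    x ^ 2 + 2 * H * x + I₂ / 4 = 2 * x * z + 1 ∧
    u ^ 2 = x * (x ^ 2 + 2 * H * x + I₂ / 4) * (x ^ 2 + 2 * H * x - 1 + I₂ / 4) :=
  C₂_canonical_form_general hs hz hcurve hx hu
end

section
/- Let R be a commutative ring and let G₁, G₂, G₃ ∈ R[x] be polynomials of degree at most 2, G_j(x) = g_{j2}x² + g_{j1}x + g_{j0}. Let L₁ = [G₂,G₃], L₂ = [G₃,G₁], L₃ = [G₁,G₂], where [G,G̃] := G'G̃ − G G̃', and let Δ be the determinant of the 3×3 matrix whose j-th row is (g_{j0}, g_{j1}, g_{j2}). Then for all x, X ∈ R: G₁(x)L₁(X) + G₂(x)L₂(X) + G₃(x)L₃(X) = −Δ·(x − X)². -/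
/-!
The vector `(L₁, L₂, L₃)(X)` is the cross product of `G'(X)` and `G(X)`, so the left-hand side is
the scalar triple product of `G(x)`, `G'(X)` and `G(X)`. These three vectors are the images under
the coefficient matrix of `(1, x, x²)`, `(0, 1, 2X)` and `(1, X, X²)`, so the triple product is
`Δ` times the confluent Vandermonde determinant of the latter, which is `-(x - X)²`.
-/

open Matrix

section

variable {R : Type*} [CommRing R]

theorem mulVec_dotProduct_cross_mulVec (A : Matrix (Fin 3) (Fin 3) R) (u v w : Fin 3 → R) :
    A *ᵥ u ⬝ᵥ (A *ᵥ v) ⨯₃ (A *ᵥ w) = A.det * (u ⬝ᵥ v ⨯₃ w) := by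
  have rows_mul : of ![A *ᵥ u, A *ᵥ v, A *ᵥ w] = of ![u, v, w] * Aᵀ := by
    ext i : 1
    rw [mul_apply_eq_vecMul, vecMul_transpose]
    fin_cases i <;> rfl
  calc A *ᵥ u ⬝ᵥ (A *ᵥ v) ⨯₃ (A *ᵥ w)
      = (of ![A *ᵥ u, A *ᵥ v, A *ᵥ w]).det := triple_product_eq_det _ _ _
    _ = (of ![u, v, w]).det * A.det := by rw [rows_mul, det_mul, det_transpose]
    _ = A.det * (u ⬝ᵥ v ⨯₃ w) := by rw [mul_comm, triple_product_eq_det]; rfl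

/-- The point `(1, x, x²)` of the standard (Veronese) conic; pairing it with the coefficients of a
quadratic polynomial, constant term first, evaluates the polynomial at `x`. -/
def conicPoint (x : R) : Fin 3 → R := ![1, x, x ^ 2]

/-- The formal derivative `(0, 1, 2x)` of `conicPoint` at `x`; pairing it with the coefficients of
a quadratic polynomial, constant term first, evaluates the derivative of the polynomial at `x`. -/
def conicTangent (x : R) : Fin 3 → R := ![0, 1, 2 * x]

theorem mulVec_conicPoint_apply {m : Type*} (A : Matrix m (Fin 3) R) (x : R) (i : m) :
    (A *ᵥ conicPoint x) i = A i 2 * x ^ 2 + A i 1 * x + A i 0 := by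
  simp only [conicPoint, mulVec, vec3_dotProduct, cons_val]
  ring

theorem mulVec_conicTangent_apply {m : Type*} (A : Matrix m (Fin 3) R) (x : R) (i : m) :
    (A *ᵥ conicTangent x) i = 2 * A i 2 * x + A i 1 := by
  simp only [conicTangent, mulVec, vec3_dotProduct, cons_val]
  ring

theorem conicPoint_dotProduct_cross_conicTangent_conicPoint (x y : R) :
    conicPoint x ⬝ᵥ conicTangent y ⨯₃ conicPoint y = -(x - y) ^ 2 := by
  simp only [conicPoint, conicTangent, cross_apply, vec3_dotProduct', cons_val]
  ring

theorem mulVec_conicPoint_dotProduct_cross (A : Matrix (Fin 3) (Fin 3) R) (x y : R) :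
    A *ᵥ conicPoint x ⬝ᵥ (A *ᵥ conicTangent y) ⨯₃ (A *ᵥ conicPoint y) =
      -A.det * (x - y) ^ 2 := by
  rw [mulVec_dotProduct_cross_mulVec, conicPoint_dotProduct_cross_conicTangent_conicPoint,
    mul_neg, neg_mul]

end

/-- The fundamental bilinear identity behind Richelot's construction: if
`G_j(x) = g_{j2}x² + g_{j1}x + g_{j0}` and `L₁ = [G₂,G₃]`, `L₂ = [G₃,G₁]`,
`L₃ = [G₁,G₂]` (with `[G,G̃] = G'G̃ − GG̃'`), and `Δ = det(g_{ij})`, then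
`G₁(x)L₁(X) + G₂(x)L₂(X) + G₃(x)L₃(X) = −Δ(x − X)²`. -/
theorem richelot_bilinear_identity
    (R : Type*) [CommRing R]
    (g₁₀ g₁₁ g₁₂ g₂₀ g₂₁ g₂₂ g₃₀ g₃₁ g₃₂ : R)
    (G₁ G₂ G₃ L₁ L₂ L₃ : R → R)
    (hG₁ : ∀ x, G₁ x = g₁₂ * x ^ 2 + g₁₁ * x + g₁₀)
    (hG₂ : ∀ x, G₂ x = g₂₂ * x ^ 2 + g₂₁ * x + g₂₀)
    (hG₃ : ∀ x, G₃ x = g₃₂ * x ^ 2 + g₃₁ * x + g₃₀)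
    (hL₁ : ∀ X, L₁ X = (2 * g₂₂ * X + g₂₁) * G₃ X - G₂ X * (2 * g₃₂ * X + g₃₁))
    (hL₂ : ∀ X, L₂ X = (2 * g₃₂ * X + g₃₁) * G₁ X - G₃ X * (2 * g₁₂ * X + g₁₁))
    (hL₃ : ∀ X, L₃ X = (2 * g₁₂ * X + g₁₁) * G₂ X - G₁ X * (2 * g₂₂ * X + g₂₁))
    (Δ : R) (hΔ : Δ = Matrix.det !![g₁₀, g₁₁, g₁₂; g₂₀, g₂₁, g₂₂; g₃₀, g₃₁, g₃₂]) :
    ∀ x X : R, G₁ x * L₁ X + G₂ x * L₂ X + G₃ x * L₃ X = -Δ * (x - X) ^ 2 := by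
  intro x X
  let g : Matrix (Fin 3) (Fin 3) R := !![g₁₀, g₁₁, g₁₂; g₂₀, g₂₁, g₂₂; g₃₀, g₃₁, g₃₂]
  have hG (t : R) : ![G₁ t, G₂ t, G₃ t] = g *ᵥ conicPoint t := by
    ext j
    fin_cases j <;> simp [g, hG₁, hG₂, hG₃, mulVec_conicPoint_apply]
  have hL : ![L₁ X, L₂ X, L₃ X] = (g *ᵥ conicTangent X) ⨯₃ (g *ᵥ conicPoint X) := by
    have hG' : g *ᵥ conicTangent X =
        ![2 * g₁₂ * X + g₁₁, 2 * g₂₂ * X + g₂₁, 2 * g₃₂ * X + g₃₁] := by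
      ext j
      fin_cases j <;> simp [g, mulVec_conicTangent_apply]
    rw [hG', ← hG, cross_apply, hL₁, hL₂, hL₃]
    simp only [cons_val, mul_comm]
  calc G₁ x * L₁ X + G₂ x * L₂ X + G₃ x * L₃ X
      = ![G₁ x, G₂ x, G₃ x] ⬝ᵥ ![L₁ X, L₂ X, L₃ X] := (vec3_dotProduct' ..).symm
    _ = -Δ * (x - X) ^ 2 := by rw [hG, hL, mulVec_conicPoint_dotProduct_cross, hΔ]
end

section
/- Let K be a field of characteristic zero and let G₁, G₂, G₃ ∈ K[x] be polynomials of degree at most 2, G_j(x) = g_{j2}x² + g_{j1}x + g_{j0}, with L₁ = [G₂,G₃], L₂ = [G₃,G₁], L₃ = [G₁,G₂] (where [G,G̃] := G'G̃ − G G̃') and Δ the determinant of the 3×3 matrix whose j-th row is (g_{j0}, g_{j1}, g_{j2}); assume Δ ≠ 0. Suppose x, y, X, Y ∈ K satisfy y² = G₁(x)G₂(x)G₃(x), Δ·Y² = L₁(X)L₂(X)L₃(X), and the correspondence equation G₁(x)L₁(X) + G₂(x)L₂(X) = 0. Then (yY)² = (G₁(x)L₁(X)(x − X))², i.e. yY =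 ± G₁(x)L₁(X)(x − X). Hence on the correspondence curve Z the second defining equation G₁(x)L₁(X)(x − X) = yY is consistent with the curve equations. -/
/-!
The vector `(L₁(X), L₂(X), L₃(X))` is the cross product of `G'(X)` and `G(X)`, where
`G = (G₁, G₂, G₃)`, so `G₁(x)L₁(X) + G₂(x)L₂(X) + G₃(x)L₃(X)` is a triple product. Factoring out
the coefficient matrix of `G` leaves a confluent Vandermonde determinant, and the sum equals
`-Δ(x - X)²`. On the correspondence the first two summands cancel, whence
`G₃(x)L₃(X) = -Δ(x - X)²`; multiplying the two curve equations and cancelling `Δ` finishes.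
-/

open Matrix

section

variable {R : Type*} [CommRing R]

theorem mulVec_triple_product_mulVec (A : Matrix (Fin 3) (Fin 3) R) (u v w : Fin 3 → R) :
    (A *ᵥ u) ⬝ᵥ (A *ᵥ v) ⨯₃ (A *ᵥ w) = A.det * (u ⬝ᵥ v ⨯₃ w) := by
  have rows_eq : of ![A *ᵥ u, A *ᵥ v, A *ᵥ w] = of ![u, v, w] * Aᵀ := by
    ext i j
    fin_cases i <;> simp [mul_apply, mulVec, dotProduct, mul_comm]
  calc (A *ᵥ u) ⬝ᵥ (A *ᵥ v) ⨯₃ (A *ᵥ w)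
      = (of ![A *ᵥ u, A *ᵥ v, A *ᵥ w]).det := triple_product_eq_det _ _ _
    _ = A.det * (of ![u, v, w]).det := by rw [rows_eq, det_mul, det_transpose, mul_comm]
    _ = A.det * (u ⬝ᵥ v ⨯₃ w) := congrArg _ (triple_product_eq_det u v w).symm

theorem confluent_vandermonde_triple_product (x t : R) :
    ![1, x, x ^ 2] ⬝ᵥ ![0, 1, 2 * t] ⨯₃ ![1, t, t ^ 2] = -(x - t) ^ 2 := by
  simp only [cross_apply, vec3_dotProduct, cons_val]
  ring

theorem quadratics_triple_product (g : Matrix (Fin 3) (Fin 3) R) (x t : R) :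
    (g *ᵥ ![1, x, x ^ 2]) ⬝ᵥ (g *ᵥ ![0, 1, 2 * t]) ⨯₃ (g *ᵥ ![1, t, t ^ 2]) =
      -(g.det * (x - t) ^ 2) := by
  rw [mulVec_triple_product_mulVec, confluent_vandermonde_triple_product, mul_neg]

theorem mul_sq_eq_of_mul_add_mul_eq_zero {Δ y z d a₁ a₂ a₃ b₁ b₂ b₃ : R} (hΔ : IsRegular Δ)
    (hy : y ^ 2 = a₁ * a₂ * a₃) (hz : Δ * z ^ 2 = b₁ * b₂ * b₃)
    (hcancel : a₁ * b₁ + a₂ * b₂ = 0)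
    (hsum : a₁ * b₁ + a₂ * b₂ + a₃ * b₃ = -(Δ * d ^ 2)) :
    (y * z) ^ 2 = (a₁ * b₁ * d) ^ 2 := by
  have h₂ : a₂ * b₂ = -(a₁ * b₁) := by linear_combination hcancel
  have h₃ : a₃ * b₃ = -(Δ * d ^ 2) := by linear_combination hsum - hcancel
  refine hΔ.left ?_
  calc Δ * (y * z) ^ 2
      = y ^ 2 * (Δ * z ^ 2) := by ring
    _ = (a₁ * b₁) * (a₂ * b₂) * (a₃ * b₃) := by rw [hy, hz]; ring
    _ = Δ * (a₁ * b₁ * d) ^ 2 := by rw [h₂, h₃]; ring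

end

theorem richelot_correspondence_consistency_general
    {R : Type*} [CommRing R]
    (g₁₀ g₁₁ g₁₂ g₂₀ g₂₁ g₂₂ g₃₀ g₃₁ g₃₂ : R)
    (G₁ G₂ G₃ L₁ L₂ L₃ : R → R)
    (hG₁ : ∀ x, G₁ x = g₁₂ * x ^ 2 + g₁₁ * x + g₁₀)
    (hG₂ : ∀ x, G₂ x = g₂₂ * x ^ 2 + g₂₁ * x + g₂₀)
    (hG₃ : ∀ x, G₃ x = g₃₂ * x ^ 2 + g₃₁ * x + g₃₀)
    (hL₁ : ∀ X, L₁ X = (2 * g₂₂ * X + g₂₁) * G₃ X - G₂ X * (2 * g₃₂ * X + g₃₁))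
    (hL₂ : ∀ X, L₂ X = (2 * g₃₂ * X + g₃₁) * G₁ X - G₃ X * (2 * g₁₂ * X + g₁₁))
    (hL₃ : ∀ X, L₃ X = (2 * g₁₂ * X + g₁₁) * G₂ X - G₁ X * (2 * g₂₂ * X + g₂₁))
    (Δ : R) (hΔ : Δ = Matrix.det !![g₁₀, g₁₁, g₁₂; g₂₀, g₂₁, g₂₂; g₃₀, g₃₁, g₃₂])
    (hΔreg : IsRegular Δ)
    (x y X Y : R)
    (hC : y ^ 2 = G₁ x * G₂ x * G₃ x)
    (hChat : Δ * Y ^ 2 = L₁ X * L₂ X * L₃ X)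
    (hcorr : G₁ x * L₁ X + G₂ x * L₂ X = 0) :
    (y * Y) ^ 2 = (G₁ x * L₁ X * (x - X)) ^ 2 := by
  have hsum : G₁ x * L₁ X + G₂ x * L₂ X + G₃ x * L₃ X = -(Δ * (x - X) ^ 2) := by
    rw [hΔ, ← quadratics_triple_product]
    simp only [hL₁, hL₂, hL₃, hG₁, hG₂, hG₃, cross_apply, vec3_dotProduct, mulVec, of_apply,
      cons_val]
    ring
  exact mul_sq_eq_of_mul_add_mul_eq_zero hΔreg hC hChat hcorr hsum

/-- Consistency of the second defining equation of Richelot's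
(2,2)-correspondence: on the locus `G₁(x)L₁(X) + G₂(x)L₂(X) = 0` of
`C × Ĉ`, one has `(yY)² = (G₁(x)L₁(X)(x − X))²`. -/
theorem richelot_correspondence_consistency
    (K : Type*) [Field K] [CharZero K]
    (g₁₀ g₁₁ g₁₂ g₂₀ g₂₁ g₂₂ g₃₀ g₃₁ g₃₂ : K)
    (G₁ G₂ G₃ L₁ L₂ L₃ : K → K)
    (hG₁ : ∀ x, G₁ x = g₁₂ * x ^ 2 + g₁₁ * x + g₁₀)
    (hG₂ : ∀ x, G₂ x = g₂₂ * x ^ 2 + g₂₁ * x + g₂₀)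
    (hG₃ : ∀ x, G₃ x = g₃₂ * x ^ 2 + g₃₁ * x + g₃₀)
    (hL₁ : ∀ X, L₁ X = (2 * g₂₂ * X + g₂₁) * G₃ X - G₂ X * (2 * g₃₂ * X + g₃₁))
    (hL₂ : ∀ X, L₂ X = (2 * g₃₂ * X + g₃₁) * G₁ X - G₃ X * (2 * g₁₂ * X + g₁₁))
    (hL₃ : ∀ X, L₃ X = (2 * g₁₂ * X + g₁₁) * G₂ X - G₁ X * (2 * g₂₂ * X + g₂₁))
    (Δ : K) (hΔ : Δ = Matrix.det !![g₁₀, g₁₁, g₁₂; g₂₀, g₂₁, g₂₂; g₃₀, g₃₁, g₃₂])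
    (hΔ0 : Δ ≠ 0)
    (x y X Y : K)
    (hC : y ^ 2 = G₁ x * G₂ x * G₃ x)
    (hChat : Δ * Y ^ 2 = L₁ X * L₂ X * L₃ X)
    (hcorr : G₁ x * L₁ X + G₂ x * L₂ X = 0) :
    (y * Y) ^ 2 = (G₁ x * L₁ X * (x - X)) ^ 2 := by
  exact richelot_correspondence_consistency_general g₁₀ g₁₁ g₁₂ g₂₀ g₂₁ g₂₂ g₃₀ g₃₁ g₃₂
    G₁ G₂ G₃ L₁ L₂ L₃ hG₁ hG₂ hG₃ hL₁ hL₂ hL₃ Δ hΔ (.of_ne_zero hΔ0) x y X Y hC hChat hcorr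
end

section
/- Let K be a field of characteristic zero containing an element i with i² = −1, and let H, I₂ ∈ K. Suppose x, u, ξ, η ∈ K satisfy the equation of C₂: u² = x(x² + 2Hx + I₂/4)(x² + 2Hx + I₂/4 − 1), the equation of Kowalewski's curve C₁: η² = 2ξ((ξ − H)² + 1 − I₂/4)((ξ − H)² − I₂/4), and the correspondence equation −2ξx + (x² + 2Hx + I₂/4)((ξ − H)² + 1 − I₂/4) = 0. Then (uη)² = −(2ξx(x − ξ + H))², i.e. uη = ± 2i·ξx(x − ξ + H). -/
/-!
For three polynomials `G₀, G₁, G₂` of degree at most two, with Richelot brackets `L₀, L₁, L₂` and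
coefficient determinant `δ`, one has `∑ Gᵢ(x) Lᵢ(X) = -δ (x - X)²`. On the locus
`G₀(x) L₀(X) + G₁(x) L₁(X) = 0` this leaves `G₂(x) L₂(X) = -δ (x - X)²`, so that
`∏ Gᵢ(x) · ∏ Lᵢ(X) = δ (G₀(x) L₀(X) (x - X))²`. The Kowalewski correspondence is the case of the
factorization `x, x² + 2Hx + I₂/4, x² + 2Hx + I₂/4 - 1` at `X = ξ - H`, where `δ = -1`.
-/

open Polynomial

section Richelot

variable {R : Type*} [CommRing R]

/-- The Richelot bracket `[Gⱼ, Gₖ] = Gⱼ' Gₖ - Gⱼ Gₖ'`, for `(i, j, k)` a cyclic permutation of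
`(0, 1, 2)`: the indices are added modulo 3. The bracket is the Wronskian of the two polynomials in
the opposite order. -/
noncomputable def richelotBracket (G : Fin 3 → R[X]) (i : Fin 3) : R[X] :=
  wronskian (G (i + 2)) (G (i + 1))

/-- The determinant of three polynomials of degree at most two in the basis `1, X, X²`. Its sign
depends on this order of the basis. -/
def richelotDet (G : Fin 3 → R[X]) : R :=
  (Matrix.of fun i j : Fin 3 => (G i).coeff j).det

theorem eval_richelotBracket (G : Fin 3 → R[X]) (i : Fin 3) (t : R) :
    (richelotBracket G i).eval t =
      (G (i + 1)).derivative.eval t * (G (i + 2)).eval t -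
        (G (i + 1)).eval t * (G (i + 2)).derivative.eval t := by
  simp only [richelotBracket, wronskian, eval_sub, eval_mul]
  ring

theorem eval_of_natDegree_le_two {P : R[X]} (hP : P.natDegree ≤ 2) (t : R) :
    P.eval t = P.coeff 0 + P.coeff 1 * t + P.coeff 2 * t ^ 2 := by
  simp [eval_eq_sum_range' (Nat.lt_succ_of_le hP), Finset.sum_range_succ]

theorem eval_derivative_of_natDegree_le_two {P : R[X]} (hP : P.natDegree ≤ 2) (t : R) :
    P.derivative.eval t = P.coeff 1 + 2 * P.coeff 2 * t := by
  have hP' : P.derivative.natDegree < 2 :=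
    (natDegree_derivative_le P).trans_lt (by omega)
  simp only [eval_eq_sum_range' hP', coeff_derivative, Finset.sum_range_succ,
    Finset.sum_range_zero, Nat.cast_zero, Nat.cast_one, zero_add, Nat.reduceAdd]
  ring

theorem sum_eval_mul_eval_richelotBracket {G : Fin 3 → R[X]} (hG : ∀ i, (G i).natDegree ≤ 2)
    (x t : R) :
    ∑ i, (G i).eval x * (richelotBracket G i).eval t = -richelotDet G * (x - t) ^ 2 := by
  simp only [eval_richelotBracket, eval_of_natDegree_le_two (hG _),
    eval_derivative_of_natDegree_le_two (hG _), richelotDet, Matrix.det_fin_three,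
    Matrix.of_apply, Fin.sum_univ_three, Fin.reduceAdd, Fin.isValue, Fin.val_zero, Fin.val_one,
    Fin.val_two]
  ring

theorem richelot_correspondence {G : Fin 3 → R[X]} (hG : ∀ i, (G i).natDegree ≤ 2) {x y t w : R}
    (hy : y ^ 2 = ∏ i, (G i).eval x) (hw : w ^ 2 = ∏ i, (richelotBracket G i).eval t)
    (hcorr : (G 0).eval x * (richelotBracket G 0).eval t +
      (G 1).eval x * (richelotBracket G 1).eval t = 0) :
    (y * w) ^ 2 =
      richelotDet G * ((G 0).eval x * (richelotBracket G 0).eval t * (x - t)) ^ 2 := by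
  have hlast : (G 2).eval x * (richelotBracket G 2).eval t = -richelotDet G * (x - t) ^ 2 := by
    rw [← sum_eval_mul_eval_richelotBracket hG, Fin.sum_univ_three, hcorr, zero_add]
  calc (y * w) ^ 2
      = ((G 0).eval x * (richelotBracket G 0).eval t) *
          ((G 1).eval x * (richelotBracket G 1).eval t) *
          ((G 2).eval x * (richelotBracket G 2).eval t) := by
        rw [mul_pow, hy, hw, Fin.prod_univ_three, Fin.prod_univ_three]
        ring
    _ = ((G 0).eval x * (richelotBracket G 0).eval t) *
          -((G 0).eval x * (richelotBracket G 0).eval t) *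
          (-richelotDet G * (x - t) ^ 2) := by
        rw [hlast, eq_neg_of_add_eq_zero_right hcorr]
    _ = richelotDet G * ((G 0).eval x * (richelotBracket G 0).eval t * (x - t)) ^ 2 := by
        ring

end Richelot

section Kowalewski

variable {R : Type*} [CommRing R]

/-- The factors `x`, `x² + 2Hx + c` and `x² + 2Hx + c - 1` of the right-hand side of the equation
of `C₂`, where `c` stands for `I₂ / 4`. -/
noncomputable def kowalewskiFactors (H c : R) : Fin 3 → R[X] :=
  ![X, X ^ 2 + C (2 * H) * X + C c, X ^ 2 + C (2 * H) * X + C c - 1]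

theorem natDegree_kowalewskiFactors_le (H c : R) (i : Fin 3) :
    (kowalewskiFactors H c i).natDegree ≤ 2 := by
  fin_cases i
  · exact natDegree_X_le.trans one_le_two
  · change (X ^ 2 + C (2 * H) * X + C c).natDegree ≤ 2
    compute_degree
  · change (X ^ 2 + C (2 * H) * X + C c - 1).natDegree ≤ 2
    compute_degree

theorem eval_kowalewskiFactors (H c x : R) (i : Fin 3) :
    (kowalewskiFactors H c i).eval x =
      ![x, x ^ 2 + 2 * H * x + c, x ^ 2 + 2 * H * x + c - 1] i := by
  fin_cases i <;> simp [kowalewskiFactors]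

theorem eval_derivative_kowalewskiFactors (H c x : R) (i : Fin 3) :
    (kowalewskiFactors H c i).derivative.eval x = ![1, 2 * x + 2 * H, 2 * x + 2 * H] i := by
  fin_cases i <;> simp [kowalewskiFactors, one_add_one_eq_two]

theorem eval_richelotBracket_kowalewskiFactors (H c t : R) (i : Fin 3) :
    (richelotBracket (kowalewskiFactors H c) i).eval t =
      ![-2 * (t + H), t ^ 2 + 1 - c, -(t ^ 2 - c)] i := by
  rw [eval_richelotBracket]
  simp only [eval_kowalewskiFactors, eval_derivative_kowalewskiFactors]
  fin_cases i <;>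
    simp only [Fin.zero_eta, Fin.mk_one, Fin.reduceFinMk, Fin.reduceAdd, zero_add,
      Matrix.cons_val] <;>
    ring

theorem richelotDet_kowalewskiFactors (H c : R) : richelotDet (kowalewskiFactors H c) = -1 := by
  simp [richelotDet, kowalewskiFactors, Matrix.det_fin_three, coeff_X, coeff_one, coeff_C,
    neg_add_eq_sub]

theorem C₂_C₁_correspondence_general (H c : R) {x u ξ η : R}
    (hC₂ : u ^ 2 = x * (x ^ 2 + 2 * H * x + c) * (x ^ 2 + 2 * H * x + c - 1))
    (hC₁ : η ^ 2 = 2 * ξ * ((ξ - H) ^ 2 + 1 - c) * ((ξ - H) ^ 2 - c))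
    (hcorr : -2 * ξ * x + (x ^ 2 + 2 * H * x + c) * ((ξ - H) ^ 2 + 1 - c) = 0) :
    (u * η) ^ 2 = -(2 * ξ * x * (x - ξ + H)) ^ 2 := by
  have h := richelot_correspondence (natDegree_kowalewskiFactors_le H c)
    (x := x) (y := u) (t := ξ - H) (w := η)
  simp only [Fin.prod_univ_three, eval_kowalewskiFactors, eval_richelotBracket_kowalewskiFactors,
    richelotDet_kowalewskiFactors, Matrix.cons_val, sub_add_cancel] at h
  calc (u * η) ^ 2
      = -1 * (x * (-2 * ξ) * (x - (ξ - H))) ^ 2 :=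
        h hC₂ (by linear_combination hC₁) (by linear_combination hcorr)
    _ = -(2 * ξ * x * (x - ξ + H)) ^ 2 := by ring

end Kowalewski

/-- The (2,2)-correspondence between the curve `C₂` of
Bobenko–Reyman–Semenov-Tian-Shansky and Kowalewski's curve `C₁`: on the
locus of the correspondence equation, `(uη)² = −(2ξx(x − ξ + H))²`,
i.e. `uη = ± 2i ξx(x − ξ + H)`. -/
theorem C₂_C₁_correspondence
    (K : Type*) [Field K] [CharZero K]
    (i : K) (hi : i ^ 2 = -1)
    (H I₂ : K) (x u ξ η : K)
    (hC₂ : u ^ 2 = x * (x ^ 2 + 2 * H * x + I₂ / 4) * (x ^ 2 + 2 * H * x + I₂ / 4 - 1))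
    (hC₁ : η ^ 2 = 2 * ξ * ((ξ - H) ^ 2 + 1 - I₂ / 4) * ((ξ - H) ^ 2 - I₂ / 4))
    (hcorr : -2 * ξ * x + (x ^ 2 + 2 * H * x + I₂ / 4) * ((ξ - H) ^ 2 + 1 - I₂ / 4) = 0) :
    (u * η) ^ 2 = -(2 * ξ * x * (x - ξ + H)) ^ 2 :=
  C₂_C₁_correspondence_general H (I₂ / 4) hC₂ hC₁ hcorr
end
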